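/- Let L be a 6-dimensional nilpotent Lie algebra over a field F of nilpotency class 3 with dim [L,L] = 2 such that L is stem (i.e. Z(L) ⊆ [L,L]). Then L is isomorphic to the Lie algebra L_{6,10} over F with basis x₁,…,x₆ and nonzero brackets [x₁,x₂] = x₃, [x₁,x₃] = x₆, [x₄,x₅] = x₆. -/

import Mathlib

open Module

universe u

/-- A witness to the capability of a Lie algebra `L` over `F`: a Lie algebra `E`
together with an isomorphism `L ≃ E ⧸ Z(E)`. -/
structure CapableWitness (F : Type u) (L : Type u) [Field F] [LieRing L] [LieAlgebra F L] where
  carrier : Type u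
  [lieRing : LieRing carrier]
  [lieAlgebra : LieAlgebra F carrier]
  equiv : L ≃ₗ⁅F⁆ (carrier ⧸ LieAlgebra.center F carrier)

/-- A Lie algebra `L` over a field `F` is capable if there exists a Lie algebra `E` over `F`
with `L ≅ E ⧸ Z(E)`. -/
def IsCapable (F : Type u) (L : Type u) [Field F] [LieRing L] [LieAlgebra F L] : Prop :=
  Nonempty (CapableWitness F L)

/-- `L` is isomorphic to `L_{6,10}`: basis `x₁,…,x₆` with `[x₁,x₂]=x₃`, `[x₁,x₃]=x₆`, `[x₄,x₅]=x₆`. -/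
def IsL610 (F : Type u) (L : Type u) [Field F] [LieRing L] [LieAlgebra F L] : Prop :=
  ∃ b : Basis (Fin 6) F L,
    ⁅b 0, b 1⁆ = b 2 ∧
    ⁅b 0, b 2⁆ = b 5 ∧
    ⁅b 3, b 4⁆ = b 5 ∧
    ∀ i j : Fin 6, i < j → (i, j) ≠ (0, 1) → (i, j) ≠ (0, 2) → (i, j) ≠ (3, 4) → ⁅b i, b j⁆ = 0

/-!
In class 3 with `L²` a plane, an element `w` of `L²` that does not commute with `x` spans `L²`
together with the central element `⁅x, w⁆`, so an element of `L²` that commutes with `x` is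
central. Hence `⁅x, ⁅x, y⁆⁆ ≠ 0` for some `y`: otherwise every `⁅x, y⁆` would be central and the
Jacobi identity would give `⁅x, L²⁆ = 0`. Put `w = ⁅x, y⁆` and `z = ⁅x, w⁆`; subtracting a
multiple of `x` from `y` makes `y` commute with `w`. The centralizers of `x` and `y` each have
codimension at most 2, so they meet in dimension at least 2; as the centre lies properly inside
the plane `L²`, some noncentral `k` commutes with `x` and `y`. Every element of `L` is congruent
modulo `⟨x, y, w⟩` to one commuting with `x` and `w`, and the bracket of `k` with such an element
is a multiple of `z`. This gives `l` with `⁅k, l⁆ = z`, and correcting `y` by a multiple of `k`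
makes it commute with `l` as well.
-/

section LinearAlgebra

variable {F V W : Type*} [DivisionRing F] [AddCommGroup V] [Module F V]
  [AddCommGroup W] [Module F W]

theorem finrank_le_finrank_ker_inf_ker_add [FiniteDimensional F V] (f g : V →ₗ[F] W) :
    finrank F V ≤ finrank F ↥(f.ker ⊓ g.ker) + (finrank F f.range + finrank F g.range) := by
  have h_inf := Submodule.finrank_sup_add_finrank_inf_eq f.ker g.ker
  have h_sup := Submodule.finrank_le (f.ker ⊔ g.ker)
  have h_f := f.finrank_range_add_finrank_ker
  have h_g := g.finrank_range_add_finrank_ker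
  omega

variable {f : End F V} {u w : V}

theorem span_pair_apply_eq_of_finrank_eq_two {S : Submodule F V} (hS : finrank F S = 2)
    (hw : w ∈ S) (hfw : f w ∈ S) (hne : f w ≠ 0) (hff : f (f w) = 0) :
    Submodule.span F {w, f w} = S := by
  have hw0 : w ≠ 0 := fun h => hne (by rw [h, map_zero])
  have hli : LinearIndependent F ![w, f w] := by
    refine (LinearIndependent.pair_iff' hw0).2 fun a ha => hne ?_
    have haf : a • f w = 0 := by rw [← map_smul, ha, hff]
    rw [← ha, (smul_eq_zero_iff_left hne).1 haf, zero_smul]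
  have : FiniteDimensional F S := .of_finrank_pos (by omega)
  refine Submodule.eq_of_le_of_finrank_le
    (Submodule.span_le.2 (Set.pair_subset hw hfw)) ?_
  have hspan := finrank_span_eq_card hli
  rw [Matrix.range_cons_cons_empty, Fintype.card_fin] at hspan
  rw [hS, hspan]

theorem exists_eq_smul_apply_of_mem_span_pair (hne : f w ≠ 0) (hff : f (f w) = 0)
    (hu : u ∈ Submodule.span F {w, f w}) (hfu : f u = 0) : ∃ q : F, u = q • f w := by
  obtain ⟨p, q, rfl⟩ := Submodule.mem_span_pair.1 hu
  have hp : p = 0 := by simpa [hff, hne] using hfu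
  exact ⟨q, by rw [hp, zero_smul, zero_add]⟩

end LinearAlgebra

section LieRing

variable {L : Type*} [LieRing L] {a b c : L}

theorem lie_eq_zero_symm (h : ⁅a, b⁆ = 0) : ⁅b, a⁆ = 0 := by
  rw [← lie_skew, h, neg_zero]

theorem lie_lie_eq_zero_of_lie_eq_zero (ha : ⁅c, a⁆ = 0) (hb : ⁅c, b⁆ = 0) : ⁅c, ⁅a, b⁆⁆ = 0 := by
  rw [leibniz_lie, ha, hb, zero_lie, lie_zero, add_zero]

end LieRing

section LowerCentralSeries

open LieModule

section CommRing

variable {R L M : Type*} [CommRing R] [LieRing L] [LieAlgebra R L] [AddCommGroup M] [Module R M]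
  [LieRingModule L M] {k : ℕ}

theorem lie_mem_lowerCentralSeries_succ (x : L) {m : M} (hm : m ∈ lowerCentralSeries R L M k) :
    ⁅x, m⁆ ∈ lowerCentralSeries R L M (k + 1) := by
  rw [lowerCentralSeries_succ]
  exact LieSubmodule.lie_mem_lie (LieSubmodule.mem_top x) hm

variable (R) in
theorem lie_mem_lowerCentralSeries_one (x : L) (m : M) : ⁅x, m⁆ ∈ lowerCentralSeries R L M 1 :=
  lie_mem_lowerCentralSeries_succ x (LieSubmodule.mem_top m)

variable [LieModule R L M]

theorem lowerCentralSeries_succ_eq_bot_iff_le_maxTrivSubmodule :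
    lowerCentralSeries R L M (k + 1) = ⊥ ↔ lowerCentralSeries R L M k ≤ maxTrivSubmodule R L M := by
  rw [lowerCentralSeries_succ, le_max_triv_iff_bracket_eq_bot]

theorem lie_mem_maxTrivSubmodule_of_mem_lowerCentralSeries
    (h : lowerCentralSeries R L M (k + 2) = ⊥) (x : L) {m : M}
    (hm : m ∈ lowerCentralSeries R L M k) : ⁅x, m⁆ ∈ maxTrivSubmodule R L M :=
  lowerCentralSeries_succ_eq_bot_iff_le_maxTrivSubmodule.1 h (lie_mem_lowerCentralSeries_succ x hm)

end CommRing

variable {F L : Type*} [Field F] [LieRing L] [LieAlgebra F L]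

theorem finrank_center_lt_finrank_lowerCentralSeries_one [FiniteDimensional F L]
    (hclass : lowerCentralSeries F L L 2 ≠ ⊥)
    (hstem : LieAlgebra.center F L ≤ lowerCentralSeries F L L 1) :
    finrank F (LieAlgebra.center F L) < finrank F (lowerCentralSeries F L L 1) :=
  Submodule.finrank_lt_finrank_of_lt <| lt_of_le_not_ge hstem fun h =>
    hclass (lowerCentralSeries_succ_eq_bot_iff_le_maxTrivSubmodule.2 h)

theorem exists_notMem_lie_eq_zero [FiniteDimensional F L] {N : Submodule F L}
    (hN : finrank F N + 2 * finrank F (lowerCentralSeries F L L 1) < finrank F L) (x y : L) :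
    ∃ k ∉ N, ⁅x, k⁆ = 0 ∧ ⁅y, k⁆ = 0 := by
  have h_range (a : L) :
      finrank F (LieAlgebra.ad F L a).range ≤ finrank F (lowerCentralSeries F L L 1) := by
    refine Submodule.finrank_mono ?_
    rintro _ ⟨b, rfl⟩
    exact lie_mem_lowerCentralSeries_one F a b
  have h_ker := finrank_le_finrank_ker_inf_ker_add (LieAlgebra.ad F L x) (LieAlgebra.ad F L y)
  have h_not_le : ¬ (LieAlgebra.ad F L x).ker ⊓ (LieAlgebra.ad F L y).ker ≤ N := fun hle => by
    have := Submodule.finrank_mono hle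
    have := h_range x
    have := h_range y
    omega
  obtain ⟨k, ⟨hxk, hyk⟩, hk⟩ := SetLike.not_le_iff_exists.1 h_not_le
  exact ⟨k, hk, hxk, hyk⟩

theorem span_pair_lie_eq_lowerCentralSeries_one
    (hder : finrank F (lowerCentralSeries F L L 1) = 2) (hclass : lowerCentralSeries F L L 3 = ⊥)
    {x w : L} (hw : w ∈ lowerCentralSeries F L L 1) (hne : ⁅x, w⁆ ≠ 0) :
    Submodule.span F {w, ⁅x, w⁆} = (lowerCentralSeries F L L 1).toSubmodule :=
  span_pair_apply_eq_of_finrank_eq_two (f := LieAlgebra.ad F L x) hder hw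
    (lie_mem_lowerCentralSeries_one F x w) hne
    (lie_mem_maxTrivSubmodule_of_mem_lowerCentralSeries hclass x hw x)

theorem exists_eq_smul_lie_of_lie_eq_zero
    (hder : finrank F (lowerCentralSeries F L L 1) = 2) (hclass : lowerCentralSeries F L L 3 = ⊥)
    {x w u : L} (hw : w ∈ lowerCentralSeries F L L 1) (hne : ⁅x, w⁆ ≠ 0)
    (hu : u ∈ lowerCentralSeries F L L 1) (hxu : ⁅x, u⁆ = 0) : ∃ q : F, u = q • ⁅x, w⁆ := by
  rw [← LieSubmodule.mem_toSubmodule,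
    ← span_pair_lie_eq_lowerCentralSeries_one hder hclass hw hne] at hu
  exact exists_eq_smul_apply_of_mem_span_pair (f := LieAlgebra.ad F L x) hne
    (lie_mem_maxTrivSubmodule_of_mem_lowerCentralSeries hclass x hw x) hu hxu

theorem exists_lie_lie_ne_zero
    (hder : finrank F (lowerCentralSeries F L L 1) = 2)
    (hclass : lowerCentralSeries F L L 2 ≠ ⊥ ∧ lowerCentralSeries F L L 3 = ⊥) :
    ∃ x y : L, ⁅x, ⁅x, y⁆⁆ ≠ 0 := by
  have h_not_le : ¬ lowerCentralSeries F L L 1 ≤ LieAlgebra.center F L :=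
    fun h => hclass.1 (lowerCentralSeries_succ_eq_bot_iff_le_maxTrivSubmodule.2 h)
  obtain ⟨w, hw, hw_center⟩ := SetLike.not_le_iff_exists.1 h_not_le
  obtain ⟨x, hne⟩ : ∃ x : L, ⁅x, w⁆ ≠ 0 := by
    by_contra! h
    exact hw_center h
  have h_center (u : L) (hu : u ∈ lowerCentralSeries F L L 1) (hxu : ⁅x, u⁆ = 0) :
      u ∈ LieAlgebra.center F L := by
    obtain ⟨q, rfl⟩ := exists_eq_smul_lie_of_lie_eq_zero hder hclass.2 hw hne hu hxu
    exact Submodule.smul_mem _ q (lie_mem_maxTrivSubmodule_of_mem_lowerCentralSeries hclass.2 x hw)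
  refine ⟨x, ?_⟩
  by_contra! h_all
  have h_lie_center (a : L) : ⁅x, a⁆ ∈ LieAlgebra.center F L :=
    h_center _ (lie_mem_lowerCentralSeries_one F x a) (h_all a)
  refine h_not_le ((LieSubmodule.lie_le_iff ..).2 fun a _ b _ => ?_)
  refine h_center _ (lie_mem_lowerCentralSeries_one F a b) ?_
  rw [leibniz_lie, lie_eq_zero_symm (h_lie_center a b), h_lie_center b a, add_zero]

theorem exists_lie_lie_ne_zero_lie_lie_eq_zero
    (hder : finrank F (lowerCentralSeries F L L 1) = 2)
    (hclass : lowerCentralSeries F L L 2 ≠ ⊥ ∧ lowerCentralSeries F L L 3 = ⊥) :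
    ∃ x y : L, ⁅x, ⁅x, y⁆⁆ ≠ 0 ∧ ⁅y, ⁅x, y⁆⁆ = 0 := by
  obtain ⟨x, y, hne⟩ := exists_lie_lie_ne_zero hder hclass
  have hw := lie_mem_lowerCentralSeries_one F x y
  obtain ⟨q, hq⟩ := exists_eq_smul_lie_of_lie_eq_zero hder hclass.2 hw hne
    (lie_mem_lowerCentralSeries_one F y ⁅x, y⁆)
    (lie_mem_maxTrivSubmodule_of_mem_lowerCentralSeries hclass.2 y hw x)
  have hxy : ⁅x, y - q • x⁆ = ⁅x, y⁆ := by rw [lie_sub, lie_smul, lie_self, smul_zero, sub_zero]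
  refine ⟨x, y - q • x, ?_, ?_⟩
  · rwa [hxy]
  · rw [hxy, sub_lie, smul_lie, hq, sub_self]

end LowerCentralSeries

/-- The elements `x₁, x₂, x₄, x₅` satisfy defining relations of `L_{6,10}` on these four generators,
where `x₃` and `x₆` are eliminated through `x₃ = ⁅x₁, x₂⁆` and `x₆ = ⁅x₁, x₃⁆`, and `x₆` does not
vanish. The Jacobi identity supplies the remaining relations. -/
structure IsL610Generators {L : Type*} [LieRing L] (x₁ x₂ x₄ x₅ : L) : Prop where
  six_ne_zero : ⁅x₁, ⁅x₁, x₂⁆⁆ ≠ 0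
  lie_four_five : ⁅x₄, x₅⁆ = ⁅x₁, ⁅x₁, x₂⁆⁆
  lie_two_three : ⁅x₂, ⁅x₁, x₂⁆⁆ = 0
  lie_one_four : ⁅x₁, x₄⁆ = 0
  lie_one_five : ⁅x₁, x₅⁆ = 0
  lie_two_four : ⁅x₂, x₄⁆ = 0
  lie_two_five : ⁅x₂, x₅⁆ = 0

namespace IsL610Generators

section Relations

variable {L : Type*} [LieRing L] {x₁ x₂ x₄ x₅ : L} (h : IsL610Generators x₁ x₂ x₄ x₅)
include h

theorem lie_four_three : ⁅x₄, ⁅x₁, x₂⁆⁆ = 0 :=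
  lie_lie_eq_zero_of_lie_eq_zero (lie_eq_zero_symm h.lie_one_four) (lie_eq_zero_symm h.lie_two_four)

theorem lie_five_three : ⁅x₅, ⁅x₁, x₂⁆⁆ = 0 :=
  lie_lie_eq_zero_of_lie_eq_zero (lie_eq_zero_symm h.lie_one_five) (lie_eq_zero_symm h.lie_two_five)

theorem lie_one_six : ⁅x₁, ⁅x₁, ⁅x₁, x₂⁆⁆⁆ = 0 :=
  h.lie_four_five ▸ lie_lie_eq_zero_of_lie_eq_zero h.lie_one_four h.lie_one_five

theorem lie_two_six : ⁅x₂, ⁅x₁, ⁅x₁, x₂⁆⁆⁆ = 0 :=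
  h.lie_four_five ▸ lie_lie_eq_zero_of_lie_eq_zero h.lie_two_four h.lie_two_five

theorem lie_three_six : ⁅⁅x₁, x₂⁆, ⁅x₁, ⁅x₁, x₂⁆⁆⁆ = 0 :=
  lie_eq_zero_symm <| lie_lie_eq_zero_of_lie_eq_zero
    (lie_eq_zero_symm h.lie_one_six) (lie_eq_zero_symm h.lie_two_six)

theorem lie_four_six : ⁅x₄, ⁅x₁, ⁅x₁, x₂⁆⁆⁆ = 0 :=
  lie_lie_eq_zero_of_lie_eq_zero (lie_eq_zero_symm h.lie_one_four) h.lie_four_three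

theorem lie_five_six : ⁅x₅, ⁅x₁, ⁅x₁, x₂⁆⁆⁆ = 0 :=
  lie_lie_eq_zero_of_lie_eq_zero (lie_eq_zero_symm h.lie_one_five) h.lie_five_three

end Relations

theorem linearIndependent (F : Type*) {L : Type*} [Field F] [LieRing L] [LieAlgebra F L]
    {x₁ x₂ x₄ x₅ : L} (h : IsL610Generators x₁ x₂ x₄ x₅) :
    LinearIndependent F ![x₁, x₂, ⁅x₁, x₂⁆, x₄, x₅, ⁅x₁, ⁅x₁, x₂⁆⁆] := by
  have h₃₁ : ⁅⁅x₁, x₂⁆, x₁⁆ = -⁅x₁, ⁅x₁, x₂⁆⁆ := (lie_skew _ _).symm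
  have h₅₄ : ⁅x₅, x₄⁆ = -⁅x₁, ⁅x₁, x₂⁆⁆ := by rw [← lie_skew, h.lie_four_five]
  have h₃₂ := lie_eq_zero_symm h.lie_two_three
  have h₃₄ := lie_eq_zero_symm h.lie_four_three
  have h₃₅ := lie_eq_zero_symm h.lie_five_three
  rw [Fintype.linearIndependent_iff]
  intro c hc
  replace hc : c 0 • x₁ + c 1 • x₂ + c 2 • ⁅x₁, x₂⁆ + c 3 • x₄ + c 4 • x₅
      + c 5 • ⁅x₁, ⁅x₁, x₂⁆⁆ = 0 := by
    simpa only [Fin.sum_univ_six, Matrix.cons_val] using hc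
  have hc₀ : c 0 = 0 := by
    simpa [-lie_skew, h₃₁, h₃₂, h₃₄, h₃₅, h.lie_three_six, h.six_ne_zero]
      using congrArg (⁅⁅x₁, x₂⁆, ·⁆) hc
  have hc₁ : c 1 = 0 := by
    simpa [h.lie_one_four, h.lie_one_five, h.lie_one_six, h.six_ne_zero]
      using congrArg (⁅x₁, ⁅x₁, ·⁆⁆) hc
  have hc₂ : c 2 = 0 := by
    simpa [hc₁, h.lie_one_four, h.lie_one_five, h.lie_one_six, h.six_ne_zero]
      using congrArg (⁅x₁, ·⁆) hc
  have hc₃ : c 3 = 0 := by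
    simpa [-lie_skew, hc₀, hc₁, hc₂, h₅₄, h.lie_five_six, h.six_ne_zero]
      using congrArg (⁅x₅, ·⁆) hc
  have hc₄ : c 4 = 0 := by
    simpa [hc₀, hc₁, hc₂, h.lie_four_five, h.lie_four_six, h.six_ne_zero]
      using congrArg (⁅x₄, ·⁆) hc
  have hc₅ : c 5 = 0 := by
    simpa [hc₀, hc₁, hc₂, hc₃, hc₄, h.six_ne_zero] using hc
  simpa only [Fin.forall_fin_succ, Fin.forall_fin_zero]
    using ⟨hc₀, hc₁, hc₂, hc₃, hc₄, hc₅, trivial⟩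

theorem isL610 {F L : Type u} [Field F] [LieRing L] [LieAlgebra F L] {x₁ x₂ x₄ x₅ : L}
    (h : IsL610Generators x₁ x₂ x₄ x₅) (hdim : finrank F L = 6) : IsL610 F L := by
  let b := basisOfLinearIndependentOfCardEqFinrank (h.linearIndependent F) (by simp [hdim])
  have hb : ⇑b = ![x₁, x₂, ⁅x₁, x₂⁆, x₄, x₅, ⁅x₁, ⁅x₁, x₂⁆⁆] :=
    coe_basisOfLinearIndependentOfCardEqFinrank _ _
  refine ⟨b, ?_⟩
  rw [hb]
  refine ⟨rfl, rfl, h.lie_four_five, fun i j hij h₁₂ h₁₃ h₄₅ => ?_⟩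
  fin_cases i <;> fin_cases j <;>
    first
    | exact absurd hij (by decide)
    | exact absurd rfl h₁₂
    | exact absurd rfl h₁₃
    | exact absurd rfl h₄₅
    | exact h.lie_one_four
    | exact h.lie_one_five
    | exact h.lie_one_six
    | exact h.lie_two_three
    | exact h.lie_two_four
    | exact h.lie_two_five
    | exact h.lie_two_six
    | exact lie_eq_zero_symm h.lie_four_three
    | exact lie_eq_zero_symm h.lie_five_three
    | exact h.lie_three_six
    | exact h.lie_four_six
    | exact h.lie_five_six

end IsL610Generators

section Generators

variable {F L : Type*} [Field F] [LieRing L] [LieAlgebra F L] {x y k : L}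
  (hder : ∀ a b : L, ⁅a, b⁆ ∈ Submodule.span F {⁅x, y⁆, ⁅x, ⁅x, y⁆⁆})
  (hz : ⁅x, ⁅x, y⁆⁆ ∈ LieAlgebra.center F L) (hne : ⁅x, ⁅x, y⁆⁆ ≠ 0)
  (hyw : ⁅y, ⁅x, y⁆⁆ = 0)
include hder hz hne hyw

theorem exists_mem_span_lie_sub_eq_zero (u : L) :
    ∃ v ∈ Submodule.span F {x, y, ⁅x, y⁆}, ⁅x, u - v⁆ = 0 ∧ ⁅⁅x, y⁆, u - v⁆ = 0 := by
  have hwx : ⁅⁅x, y⁆, x⁆ = -⁅x, ⁅x, y⁆⁆ := (lie_skew _ _).symm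
  have hwy : ⁅⁅x, y⁆, y⁆ = 0 := lie_eq_zero_symm hyw
  obtain ⟨β, γ, hxu⟩ := Submodule.mem_span_pair.1 (hder x u)
  have hxwu : ⁅x, ⁅⁅x, y⁆, u⁆⁆ = 0 := by
    rw [leibniz_lie, lie_eq_zero_symm (hz u), ← hxu, lie_add, lie_smul, lie_smul, lie_self, hz,
      smul_zero, smul_zero, add_zero, add_zero]
  obtain ⟨α, hα⟩ : ∃ α : F, ⁅⁅x, y⁆, u⁆ = α • ⁅x, ⁅x, y⁆⁆ :=
    exists_eq_smul_apply_of_mem_span_pair (f := LieAlgebra.ad F L x) hne (hz x)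
      (hder ⁅x, y⁆ u) hxwu
  refine ⟨-α • x + β • y + γ • ⁅x, y⁆, ?_, ?_, ?_⟩
  · exact Submodule.mem_span_triple.2 ⟨-α, β, γ, rfl⟩
  · simp [← hxu]
  · simp [-lie_skew, hα, hwx, hwy]

theorem exists_lie_eq_lie_lie
    (hk : k ∉ LieAlgebra.center F L) (hxk : ⁅x, k⁆ = 0) (hyk : ⁅y, k⁆ = 0) :
    ∃ l : L, ⁅k, l⁆ = ⁅x, ⁅x, y⁆⁆ ∧ ⁅x, l⁆ = 0 ∧ ⁅⁅x, y⁆, l⁆ = 0 := by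
  obtain ⟨u, hu⟩ : ∃ u : L, ⁅k, u⁆ ≠ 0 := by
    by_contra! h
    exact hk fun e => lie_eq_zero_symm (h e)
  obtain ⟨v, hv, hxl, hwl⟩ := exists_mem_span_lie_sub_eq_zero hder hz hne hyw u
  have hkv : ⁅k, v⁆ = 0 := by
    have hkx := lie_eq_zero_symm hxk
    have hky := lie_eq_zero_symm hyk
    obtain ⟨α, β, γ, rfl⟩ := Submodule.mem_span_triple.1 hv
    simp [hkx, hky, lie_lie_eq_zero_of_lie_eq_zero hkx hky]
  obtain ⟨q, hq⟩ : ∃ q : F, ⁅k, u - v⁆ = q • ⁅x, ⁅x, y⁆⁆ :=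
    exists_eq_smul_apply_of_mem_span_pair (f := LieAlgebra.ad F L x) hne (hz x)
      (hder k (u - v)) (lie_lie_eq_zero_of_lie_eq_zero hxk hxl)
  have hq0 : q ≠ 0 := by
    rintro rfl
    exact hu (by simpa [hkv] using hq)
  refine ⟨q⁻¹ • (u - v), ?_, ?_, ?_⟩
  · rw [lie_smul, hq, inv_smul_smul₀ hq0]
  · rw [lie_smul, hxl, smul_zero]
  · rw [lie_smul, hwl, smul_zero]

theorem exists_isL610Generators
    (hk : k ∉ LieAlgebra.center F L) (hxk : ⁅x, k⁆ = 0) (hyk : ⁅y, k⁆ = 0) :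
    ∃ y' l : L, IsL610Generators x y' k l := by
  obtain ⟨l, hkl, hxl, hwl⟩ := exists_lie_eq_lie_lie hder hz hne hyw hk hxk hyk
  have hxyl : ⁅x, ⁅y, l⁆⁆ = 0 := by rw [leibniz_lie, hwl, hxl, lie_zero, add_zero]
  obtain ⟨t, ht⟩ : ∃ t : F, ⁅y, l⁆ = t • ⁅x, ⁅x, y⁆⁆ :=
    exists_eq_smul_apply_of_mem_span_pair (f := LieAlgebra.ad F L x) hne (hz x) (hder y l) hxyl
  have hkw : ⁅k, ⁅x, y⁆⁆ = 0 :=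
    lie_lie_eq_zero_of_lie_eq_zero (lie_eq_zero_symm hxk) (lie_eq_zero_symm hyk)
  have hxy' : ⁅x, y - t • k⁆ = ⁅x, y⁆ := by rw [lie_sub, lie_smul, hxk, smul_zero, sub_zero]
  refine ⟨y - t • k, l, ?_, ?_, ?_, hxk, hxl, ?_, ?_⟩
  · rwa [hxy']
  · rw [hxy', hkl]
  · rw [hxy', sub_lie, smul_lie, hyw, hkw, smul_zero, sub_zero]
  · rw [sub_lie, smul_lie, hyk, lie_self, smul_zero, sub_zero]
  · rw [sub_lie, smul_lie, ht, hkl, sub_self]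

end Generators

/-- A 6-dimensional stem nilpotent Lie algebra of class 3 with 2-dimensional derived
subalgebra is isomorphic to `L_{6,10}`. -/
theorem stem_class_three_dim_six_iso_L610
    (F L : Type u) [Field F] [LieRing L] [LieAlgebra F L] [FiniteDimensional F L]
    (hdim : finrank F L = 6)
    (hclass : LieModule.lowerCentralSeries F L L 2 ≠ ⊥ ∧ LieModule.lowerCentralSeries F L L 3 = ⊥)
    (hder : finrank F ↥(LieModule.lowerCentralSeries F L L 1) = 2)
    (hstem : LieAlgebra.center F L ≤ LieModule.lowerCentralSeries F L L 1) :
    IsL610 F L := by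
  obtain ⟨x, y, hne, hyw⟩ := exists_lie_lie_ne_zero_lie_lie_eq_zero hder hclass
  have hw := lie_mem_lowerCentralSeries_one F x y
  have hz := lie_mem_maxTrivSubmodule_of_mem_lowerCentralSeries hclass.2 x hw
  have hspan (a b : L) : ⁅a, b⁆ ∈ Submodule.span F {⁅x, y⁆, ⁅x, ⁅x, y⁆⁆} := by
    rw [span_pair_lie_eq_lowerCentralSeries_one hder hclass.2 hw hne]
    exact lie_mem_lowerCentralSeries_one F a b
  have hcenter : finrank F (LieAlgebra.center F L).toSubmodule < 2 :=
    hder ▸ finrank_center_lt_finrank_lowerCentralSeries_one hclass.1 hstem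
  obtain ⟨k, hk, hxk, hyk⟩ :=
    exists_notMem_lie_eq_zero (N := (LieAlgebra.center F L).toSubmodule) (by omega) x y
  obtain ⟨y', l, hgen⟩ := exists_isL610Generators hspan hz hne hyw hk hxk hyk
  exact hgen.isL610 hdim
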